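/- Let λ=(λ_1,...,λ_l) be a partition of length l, let w̄_a = λ_a + l − a (so w̄_1>⋯>w̄_l≥0), let 0 ≤ k ≤ l−1, and let r_1,...,r_l be non-negative integers with Σ_{i=1}^l r_i = N_{λ,k}. Suppose the polynomial [w̄_1−r_1,...,w̄_l−r_l](t) evaluated at t = [x_1]+⋯+[x_k] is not identically zero. Then: (i) r_i = 0 for 1 ≤ i ≤ k; (ii) the sequence (w̄_{k+1}−r_{k+1}, ..., w̄_l−r_l) is a permutation of (l−k−1, ..., 1, 0); (iii) [w̄_1−r_1,...,w̄_l−r_l]([x_1]+⋯+[x_k]) = ± s_{(λ_1,...,λ_k)}([x_1]+⋯+[x_k]). -/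

import Mathlib

open MvPolynomial

/-- The polynomial `p_n(t)` defined by `exp(Σ_{n≥1} t_n k^n) = Σ_{n≥0} p_n(t) k^n`,
as a polynomial in the variables `t_1, t_2, ...` (variable `X n` stands for `t_n`). -/
noncomputable def pS (n : ℕ) : MvPolynomial ℕ ℚ :=
  ∑ m ∈ Finset.range (n + 1), (Nat.factorial m : ℚ)⁻¹ •
    ∑ c ∈ Finset.univ.filter
        (fun c : Fin m → Fin (n + 1) =>
          (∑ j, ((c j : ℕ))) = n ∧ ∀ j, 1 ≤ (c j : ℕ)),
      ∏ j, X ((c j : ℕ))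

/-- `p_n` for `n : ℤ`, with `p_n = 0` for `n < 0`. -/
noncomputable def pz (n : ℤ) : MvPolynomial ℕ ℚ :=
  if 0 ≤ n then pS n.toNat else 0

/-- The Schur function `s_λ(t) = det(p_{λ_i - i + j})_{1 ≤ i,j ≤ l}` (here `0`-indexed). -/
noncomputable def schur {l : ℕ} (lam : Fin l → ℕ) : MvPolynomial ℕ ℚ :=
  Matrix.det (Matrix.of fun a b : Fin l =>
    pz ((lam a : ℤ) - ((a : ℕ) : ℤ) + ((b : ℕ) : ℤ)))

/-- Substitution `t_n ↦ (x_1^n + ⋯ + x_k^n)/n`, i.e. `t = [x_1] + ⋯ + [x_k]`. -/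
noncomputable def toPowerSums (k : ℕ) (f : MvPolynomial ℕ ℚ) : MvPolynomial (Fin k) ℚ :=
  aeval (fun n : ℕ => (n : ℚ)⁻¹ • ∑ i : Fin k, X i ^ n) f

/-- Iterated partial derivative `∂_{i_1} ⋯ ∂_{i_r}` for a list `L = [i_1, ..., i_r]`. -/
noncomputable def derivs (L : List ℕ) (f : MvPolynomial ℕ ℚ) : MvPolynomial ℕ ℚ :=
  L.foldr (fun i g => pderiv i g) f

/-- The entries of a partition `λ` padded by zeros (`0`-indexed). -/
def pad {l : ℕ} (lam : Fin l → ℕ) (a : ℕ) : ℕ := if h : a < l then lam ⟨a, h⟩ else 0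

/-- The symbol `[i_1, ..., i_l] = det(p_{i_a - l + b})_{1 ≤ a,b ≤ l}` (here 0-indexed:
row `a`, column `b` entry is `p_{w a - l + b + 1}`). -/
noncomputable def bracket {l : ℕ} (w : Fin l → ℤ) : MvPolynomial ℕ ℚ :=
  Matrix.det (Matrix.of fun a b : Fin l =>
    pz (w a - (l : ℤ) + ((b : ℕ) : ℤ) + 1))

section GeneratingFunction

variable {R : Type*} [CommRing R]

lemma PowerSeries.coeff_pow_eq_sum_fin {f : PowerSeries R}
    (hf : PowerSeries.constantCoeff f = 0) (m n : ℕ) :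
    PowerSeries.coeff n (f ^ m) =
      ∑ c ∈ Finset.univ.filter
          (fun c : Fin m → Fin (n + 1) => (∑ j, (c j : ℕ)) = n ∧ ∀ j, 1 ≤ (c j : ℕ)),
        ∏ j, PowerSeries.coeff (c j : ℕ) f := by
  have hpow : f ^ m = ∏ _j : Fin m, f := by simp
  have hbound : ∀ e ∈ (Finset.univ : Finset (Fin m)).finsuppAntidiag n, ∀ j, e j < n + 1 := by
    intro e he j
    rw [Finset.mem_finsuppAntidiag] at he
    have := Finset.single_le_sum (f := e) (fun _ _ => Nat.zero_le _) (Finset.mem_univ j)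
    rw [he.1] at this
    omega
  rw [hpow, PowerSeries.coeff_prod]
  symm
  refine Finset.sum_of_injOn
    (fun c => Finsupp.equivFunOnFinite.symm fun j => (c j : ℕ)) ?_ ?_ ?_ ?_
  · intro c _ d _ h
    have := Finsupp.equivFunOnFinite.symm.injective h
    funext j
    exact Fin.ext (congrFun this j)
  · intro c hc
    simp only [Finset.coe_filter, Finset.mem_univ, true_and, Set.mem_ofPred_eq] at hc
    simp [hc.1]
  · intro e he hne
    by_contra h
    refine hne ⟨fun j => ⟨e j, hbound e he j⟩, ?_, by ext; simp⟩
    simp only [Finset.coe_filter, Finset.mem_univ, true_and, Set.mem_ofPred_eq]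
    refine ⟨(Finset.mem_finsuppAntidiag.mp he).1, fun j => ?_⟩
    by_contra hj
    refine h (Finset.prod_eq_zero (Finset.mem_univ j) ?_)
    have : e j = 0 := by omega
    simp [this, hf]
  · intro c _
    simp

variable [Algebra ℚ R]

lemma aeval_pS (g : ℕ → R) (n : ℕ) :
    aeval g (pS n) = PowerSeries.coeff n
      ((PowerSeries.exp R).subst (PowerSeries.mk fun i => if i = 0 then 0 else g i)) := by
  set T : PowerSeries R := PowerSeries.mk fun i => if i = 0 then 0 else g i with hT
  have hT0 : PowerSeries.constantCoeff T = 0 := by simp [hT]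
  rw [PowerSeries.coeff_subst' (PowerSeries.HasSubst.of_constantCoeff_zero' hT0),
    finsum_eq_sum_of_support_subset (s := Finset.range (n + 1))]
  · simp only [pS, map_sum, map_smul]
    refine Finset.sum_congr rfl fun m _ => ?_
    rw [PowerSeries.coeff_pow_eq_sum_fin hT0, PowerSeries.coeff_exp, one_div,
      smul_eq_mul, Algebra.smul_def]
    congr 1
    refine Finset.sum_congr rfl fun c hc => ?_
    rw [map_prod]
    refine Finset.prod_congr rfl fun j _ => ?_
    have := (Finset.mem_filter.mp hc).2.2 j
    rw [hT, PowerSeries.coeff_mk, if_neg (by omega), aeval_X]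
  · intro m hm
    by_contra h
    refine hm ?_
    simp only [Finset.coe_range, Set.mem_Iio, not_lt] at h
    have hdvd : PowerSeries.X ^ m ∣ T ^ m := pow_dvd_pow_of_dvd (PowerSeries.X_dvd_iff.mpr hT0) m
    simp [PowerSeries.X_pow_dvd_iff.mp hdvd n (by omega)]

end GeneratingFunction

section Complete

variable {R : Type*} [CommRing R]

lemma PowerSeries.one_sub_C_mul_X_mul_mk_pow (x : R) :
    (1 - PowerSeries.C x * PowerSeries.X) * PowerSeries.mk (fun n => x ^ n) = 1 := by
  ext n
  cases n with
  | zero => simp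
  | succ n => simp [sub_mul, mul_assoc, pow_succ', PowerSeries.coeff_one]

lemma PowerSeries.derivative_prod_one_sub {ι : Type*} (s : Finset ι) (x : ι → R) :
    PowerSeries.derivative R (∏ i ∈ s, (1 - PowerSeries.C (x i) * PowerSeries.X)) =
      -((∏ i ∈ s, (1 - PowerSeries.C (x i) * PowerSeries.X)) *
        PowerSeries.mk fun n => ∑ i ∈ s, x i ^ (n + 1)) := by
  classical
  induction s using Finset.induction_on with
  | empty =>
    have : (PowerSeries.mk fun _ : ℕ => (0 : R)) = 0 := by ext; simp
    simp [this]
  | insert a s ha ih =>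
    have hmk : (PowerSeries.mk fun n => ∑ i ∈ insert a s, x i ^ (n + 1)) =
        PowerSeries.C (x a) * PowerSeries.mk (fun n => x a ^ n) +
          PowerSeries.mk fun n => ∑ i ∈ s, x i ^ (n + 1) := by
      ext n
      simp [Finset.sum_insert ha, pow_succ']
    have hgeom := PowerSeries.one_sub_C_mul_X_mul_mk_pow (x a)
    rw [Finset.prod_insert ha, Derivation.leibniz, ih, hmk]
    simp only [map_sub, Derivation.leibniz, PowerSeries.derivative_C, PowerSeries.derivative_X,
      smul_eq_mul, Derivation.map_one_eq_zero, mul_one, mul_zero, add_zero, zero_sub]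
    linear_combination (∏ i ∈ s, (1 - PowerSeries.C (x i) * PowerSeries.X)) *
      PowerSeries.C (x a) * hgeom

lemma PowerSeries.coeff_prod_one_sub_eq_zero {ι : Type*} (s : Finset ι) (x : ι → R) {n : ℕ}
    (hn : s.card < n) :
    PowerSeries.coeff n (∏ i ∈ s, (1 - PowerSeries.C (x i) * PowerSeries.X)) = 0 := by
  have hcoe : (∏ i ∈ s, (1 - PowerSeries.C (x i) * PowerSeries.X)) =
      ((∏ i ∈ s, (1 - Polynomial.C (x i) * Polynomial.X) : Polynomial R) : PowerSeries R) := by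
    rw [← Polynomial.coeToPowerSeries.ringHom_apply, map_prod]
    simp
  rw [hcoe, Polynomial.coeff_coe]
  refine Polynomial.coeff_eq_zero_of_natDegree_lt (lt_of_le_of_lt ?_ hn)
  refine (Polynomial.natDegree_prod_le _ _).trans ?_
  rw [Finset.card_eq_sum_ones]
  refine Finset.sum_le_sum fun i _ => ?_
  refine (Polynomial.natDegree_sub_le _ _).trans ?_
  simpa using Polynomial.natDegree_C_mul_le (x i) Polynomial.X |>.trans Polynomial.natDegree_X_le

end Complete

/-- The generating series `∏ (1 - x_i z)` of the signed elementary symmetric polynomials. -/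
noncomputable def elemSeries (k : ℕ) : PowerSeries (MvPolynomial (Fin k) ℚ) :=
  ∏ i : Fin k, (1 - PowerSeries.C (X i) * PowerSeries.X)

/-- The generating series of the complete symmetric polynomials `p_n([x_1] + ⋯ + [x_k])`. -/
noncomputable def completeSeries (k : ℕ) : PowerSeries (MvPolynomial (Fin k) ℚ) :=
  PowerSeries.mk fun n => toPowerSums k (pS n)

lemma elemSeries_mul_completeSeries (k : ℕ) : elemSeries k * completeSeries k = 1 := by
  set T : PowerSeries (MvPolynomial (Fin k) ℚ) := PowerSeries.mk fun n =>
    if n = 0 then 0 else (n : ℚ)⁻¹ • ∑ i : Fin k, X i ^ n with hT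
  have hT0 : PowerSeries.constantCoeff T = 0 := by simp [hT]
  have hsubst := PowerSeries.HasSubst.of_constantCoeff_zero' hT0
  have hH : completeSeries k = (PowerSeries.exp (MvPolynomial (Fin k) ℚ)).subst T := by
    ext1 n
    rw [completeSeries, PowerSeries.coeff_mk, toPowerSums, aeval_pS]
  have hdT : PowerSeries.derivative (MvPolynomial (Fin k) ℚ) T =
      PowerSeries.mk fun n => ∑ i : Fin k, X i ^ (n + 1) := by
    ext1 n
    rw [PowerSeries.coeff_derivative, hT, PowerSeries.coeff_mk, PowerSeries.coeff_mk,
      if_neg (Nat.succ_ne_zero n), smul_mul_assoc]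
    have hcast : ((n : MvPolynomial (Fin k) ℚ) + 1) = C ((n + 1 : ℕ) : ℚ) := by simp
    rw [hcast, mul_comm, ← smul_eq_C_mul, smul_smul, inv_mul_cancel₀ (by positivity), one_smul]
  have hdH : PowerSeries.derivative (MvPolynomial (Fin k) ℚ) (completeSeries k) =
      completeSeries k * PowerSeries.mk fun n => ∑ i : Fin k, X i ^ (n + 1) := by
    rw [hH, PowerSeries.derivative_subst hsubst, hdT, PowerSeries.derivative_exp]
  refine PowerSeries.derivative.ext ?_ ?_
  · rw [Derivation.leibniz, hdH, elemSeries, PowerSeries.derivative_prod_one_sub]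
    simp only [smul_eq_mul, PowerSeries.derivative_one]
    ring
  · have hH0 : PowerSeries.constantCoeff (completeSeries k) = 1 := by
      rw [← PowerSeries.coeff_zero_eq_constantCoeff_apply, completeSeries, PowerSeries.coeff_mk]
      simp [pS, toPowerSums]
    rw [map_mul, hH0]
    simp [elemSeries, map_prod]

lemma toPowerSums_pz_of_neg (k : ℕ) {n : ℤ} (hn : n < 0) : toPowerSums k (pz n) = 0 := by
  simp [pz, not_le.mpr hn, toPowerSums]

lemma sum_coeff_elemSeries_mul (k : ℕ) (n : ℤ) {m : ℕ} (hm : k ≤ m) :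
    ∑ i ∈ Finset.range (m + 1),
      PowerSeries.coeff i (elemSeries k) * toPowerSums k (pz (n - i)) =
        if n = 0 then 1 else 0 := by
  rcases lt_or_ge n 0 with hn | hn
  · rw [if_neg hn.ne]
    refine Finset.sum_eq_zero fun i _ => ?_
    rw [toPowerSums_pz_of_neg k (by omega), mul_zero]
  · lift n to ℕ using hn
    have hcoeff := congrArg (PowerSeries.coeff n) (elemSeries_mul_completeSeries k)
    rw [PowerSeries.coeff_mul, Finset.Nat.sum_antidiagonal_eq_sum_range_succ
      (fun i j => PowerSeries.coeff i (elemSeries k) * PowerSeries.coeff j (completeSeries k)),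
      PowerSeries.coeff_one] at hcoeff
    simp only [Nat.cast_eq_zero]
    rw [← hcoeff]
    trans ∑ i ∈ Finset.range (max (m + 1) (n + 1)),
      PowerSeries.coeff i (elemSeries k) * toPowerSums k (pz ((n : ℤ) - i))
    · refine Finset.sum_subset (by simp) fun i _ hi => ?_
      rw [Finset.mem_range, not_lt] at hi
      rw [elemSeries, PowerSeries.coeff_prod_one_sub_eq_zero _ _ (by simp; omega), zero_mul]
    · symm
      refine Finset.sum_subset_zero_on_sdiff (by simp) (fun i hi => ?_) fun i hi => ?_
      · rw [Finset.mem_sdiff, Finset.mem_range, Finset.mem_range] at hi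
        rw [toPowerSums_pz_of_neg k (by omega), mul_zero]
      · rw [Finset.mem_range] at hi
        have : (n : ℤ) - i = ((n - i : ℕ) : ℤ) := by omega
        simp [completeSeries, this, pz]

lemma toPowerSums_det (k : ℕ) {l : ℕ} (M : Matrix (Fin l) (Fin l) (MvPolynomial ℕ ℚ)) :
    toPowerSums k M.det = (Matrix.of fun a b => toPowerSums k (M a b)).det := by
  simp only [toPowerSums]
  rw [AlgHom.map_det]
  rfl

/-- The matrix obtained from the one defining `[w_1, ..., w_l]([x_1] + ⋯ + [x_k])` by clearing the
last `l - k` columns with the recurrence for complete symmetric polynomials in `k` variables. -/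
noncomputable def reducedMatrix (k : ℕ) {l : ℕ} (w : Fin l → ℤ) :
    Matrix (Fin l) (Fin l) (MvPolynomial (Fin k) ℚ) :=
  Matrix.of fun a b => if (b : ℕ) < k then toPowerSums k (pz (w a - (l : ℤ) + ((b : ℕ) : ℤ) + 1))
    else if w a - (l : ℤ) + ((b : ℕ) : ℤ) + 1 = 0 then 1 else 0

lemma toPowerSums_bracket (k : ℕ) {l : ℕ} (w : Fin l → ℤ) :
    toPowerSums k (bracket w) = (reducedMatrix k w).det := by
  set U : Matrix (Fin l) (Fin l) (MvPolynomial (Fin k) ℚ) := Matrix.of fun c b =>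
    if (b : ℕ) < k then (if c = b then 1 else 0)
    else if (c : ℕ) ≤ b then PowerSeries.coeff ((b : ℕ) - c) (elemSeries k) else 0 with hU
  have hE0 : PowerSeries.constantCoeff (elemSeries k) = 1 := by simp [elemSeries, map_prod]
  have hdet : U.det = 1 := by
    rw [Matrix.det_of_isUpperTriangular]
    · refine Finset.prod_eq_one fun b _ => ?_
      simp [hU, hE0]
    · intro c b hbc
      have hbc' : b < c := hbc
      have hlt : ¬ c ≤ b := not_le.mpr hbc'
      simp [hU, hbc'.ne', hlt]
  rw [bracket, toPowerSums_det, ← mul_one (Matrix.det _), ← hdet, ← Matrix.det_mul]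
  congr 1
  ext1 a b
  rw [Matrix.mul_apply]
  by_cases hb : (b : ℕ) < k
  · simp [hU, reducedMatrix, hb]
  · simp only [hU, reducedMatrix, Matrix.of_apply, if_neg hb]
    rw [← sum_coeff_elemSeries_mul k _ (not_lt.mp hb), ← Finset.sum_range_reflect,
      Fin.sum_univ_eq_sum_range
      (fun c => toPowerSums k (pz (w a - (l : ℤ) + (c : ℤ) + 1)) *
        if c ≤ b then PowerSeries.coeff ((b : ℕ) - c) (elemSeries k) else 0) l]
    symm
    refine Finset.sum_subset_zero_on_sdiff (Finset.range_subset_range.mpr b.2)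
      (fun c hc => ?_) fun c hc => ?_
    · rw [Finset.mem_sdiff, Finset.mem_range, Finset.mem_range] at hc
      rw [if_neg (by omega), mul_zero]
    · rw [Finset.mem_range] at hc
      rw [if_pos (by omega), mul_comm, Nat.add_sub_cancel]
      congr 3
      omega

lemma exists_perm_of_reducedMatrix_det_ne_zero {k l : ℕ} {w : Fin l → ℤ}
    (h : (reducedMatrix k w).det ≠ 0) :
    ∃ σ : Equiv.Perm (Fin l), ∀ b : Fin l, k ≤ (b : ℕ) →
      w (σ b) = (l : ℤ) - 1 - ((b : ℕ) : ℤ) := by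
  rw [Matrix.det_apply] at h
  obtain ⟨σ, -, hσ⟩ := Finset.exists_ne_zero_of_sum_ne_zero h
  have hne : ∀ b, reducedMatrix k w (σ b) b ≠ 0 := fun b hb =>
    hσ (by rw [Finset.prod_eq_zero (f := fun i => reducedMatrix k w (σ i) i)
      (Finset.mem_univ b) hb, smul_zero])
  refine ⟨σ, fun b hb => ?_⟩
  have := hne b
  rw [reducedMatrix, Matrix.of_apply, if_neg (not_lt.mpr hb)] at this
  by_contra hw
  exact this (if_neg (by omega))

lemma reducedMatrix_det_eq {k l : ℕ} (hkl : k ≤ l) {w : Fin l → ℤ} {σ : Equiv.Perm (Fin l)}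
    (hge : ∀ b : Fin l, k ≤ (b : ℕ) → w (σ b) = (l : ℤ) - 1 - ((b : ℕ) : ℤ))
    (hσ : ∀ b : Fin l, ((σ b : Fin l) : ℕ) < k ↔ (b : ℕ) < k) :
    ∃ ε : ℤˣ, (reducedMatrix k w).det = ((ε : ℤ) : MvPolynomial (Fin k) ℚ) *
      (Matrix.of fun a b : Fin k => toPowerSums k
        (pz (w (Fin.castLE hkl a) - (l : ℤ) + ((b : ℕ) : ℤ) + 1))).det := by
  have hpre : ∀ a : Fin l, ¬ (a : ℕ) < k →
      ∃ b : Fin l, k ≤ (b : ℕ) ∧ σ b = a := fun a ha =>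
    ⟨σ.symm a, by have := hσ (σ.symm a); rw [σ.apply_symm_apply] at this; omega,
      σ.apply_symm_apply a⟩
  have hσ' : ∀ b : Fin l, (¬ ((σ b : Fin l) : ℕ) < k) ↔ ¬ (b : ℕ) < k := fun b => not_congr (hσ b)
  set τ : Equiv.Perm {a : Fin l // ¬ (a : ℕ) < k} := σ.subtypePerm hσ' with hτ
  refine ⟨Equiv.Perm.sign τ⁻¹, ?_⟩
  rw [Matrix.twoBlockTriangular_det _ (fun a : Fin l => (a : ℕ) < k), mul_comm,
    ← Matrix.det_permutation]
  · congr 1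
    · congr 1
      ext1 ⟨a, ha⟩ ⟨b, hb⟩
      obtain ⟨c, hc, rfl⟩ := hpre a ha
      have hτa : τ⁻¹ ⟨σ c, ha⟩ = ⟨c, not_lt.mpr hc⟩ := by
        rw [Equiv.Perm.inv_eq_iff_eq]
        rfl
      rw [Matrix.toSquareBlockProp_def, Matrix.of_apply, reducedMatrix, Matrix.of_apply,
        if_neg hb, Equiv.Perm.permMatrix, PEquiv.toMatrix_apply, Equiv.toPEquiv_apply, hτa, hge c hc]
      refine if_congr ?_ rfl rfl
      rw [Option.mem_some_iff, Subtype.mk.injEq, Fin.ext_iff]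
      dsimp only
      omega
    · rw [← Matrix.det_submatrix_equiv_self (Fin.castLEquiv hkl)]
      congr 1
      ext1 a b
      simp [Matrix.toSquareBlockProp_def, reducedMatrix]
  · intro a ha b hb
    obtain ⟨c, hc, rfl⟩ := hpre a ha
    rw [reducedMatrix, Matrix.of_apply, if_pos hb, hge c hc]
    exact toPowerSums_pz_of_neg k (by omega)

/-- If removing the `r_a` from a strictly decreasing sequence and selecting `k` of the terms
leaves at least the sum of the `k` largest terms, then these are the ones selected, unchanged. -/
lemma eq_zero_and_lt_iff_of_sum_le {k l : ℕ} (hk : k < l) {v : Fin l → ℤ} (hv : StrictAnti v)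
    {r : Fin l → ℕ} {σ : Equiv.Perm (Fin l)}
    (hsum : ∑ b ∈ Finset.univ.filter (fun b : Fin l => (b : ℕ) < k), v b ≤
      ∑ b ∈ Finset.univ.filter (fun b : Fin l => (b : ℕ) < k), (v (σ b) - r (σ b))) :
    (∀ a : Fin l, (a : ℕ) < k → r a = 0) ∧
      ∀ b : Fin l, ((σ b : Fin l) : ℕ) < k ↔ (b : ℕ) < k := by
  set f : Fin l → ℤ := fun a => v a - v ⟨k, hk⟩ with hf
  have hfpos : ∀ a : Fin l, (a : ℕ) < k → 0 < f a := fun a ha => sub_pos.mpr (hv ha)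
  have hfneg : ∀ a : Fin l, k ≤ (a : ℕ) → f a ≤ 0 := fun a ha =>
    sub_nonpos.mpr (hv.antitone ha)
  set g : Fin l → ℤ := fun a => (if (a : ℕ) < k then f a else 0) -
    (if ((σ.symm a : Fin l) : ℕ) < k then f a - r a else 0) with hg
  have hgnonneg : ∀ a ∈ Finset.univ, 0 ≤ g a := by
    intro a _
    have h1 := hfpos a
    have h2 := hfneg a
    simp only [hg]
    split_ifs <;> grind
  have hgsum : ∑ a, g a ≤ 0 := by
    have hT : ∑ a, (if ((σ.symm a : Fin l) : ℕ) < k then f a - r a else 0) =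
        ∑ b ∈ Finset.univ.filter (fun b : Fin l => (b : ℕ) < k), (v (σ b) - r (σ b)) -
          ∑ b ∈ Finset.univ.filter (fun b : Fin l => (b : ℕ) < k), v ⟨k, hk⟩ := by
      rw [← Equiv.sum_comp σ, Finset.sum_filter, Finset.sum_filter, ← Finset.sum_sub_distrib]
      refine Finset.sum_congr rfl fun b _ => ?_
      rw [σ.symm_apply_apply]
      split_ifs
      · simp only [hf]
        ring
      · rfl
    have hK : ∑ a : Fin l, (if (a : ℕ) < k then f a else 0) =
        ∑ b ∈ Finset.univ.filter (fun b : Fin l => (b : ℕ) < k), v b -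
          ∑ b ∈ Finset.univ.filter (fun b : Fin l => (b : ℕ) < k), v ⟨k, hk⟩ := by
      rw [← Finset.sum_filter, ← Finset.sum_sub_distrib]
    rw [hg, Finset.sum_sub_distrib, hT, hK]
    linarith
  have hgzero := (Finset.sum_eq_zero_iff_of_nonneg hgnonneg).mp
    (le_antisymm hgsum (Finset.sum_nonneg hgnonneg))
  have hsel : ∀ a : Fin l, (a : ℕ) < k → ((σ.symm a : Fin l) : ℕ) < k ∧ r a = 0 := by
    intro a ha
    have h0 := hgzero a (Finset.mem_univ a)
    have h1 := hfpos a ha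
    simp only [hg, if_pos ha] at h0
    split_ifs at h0 with h
    · exact ⟨h, by omega⟩
    · omega
  refine ⟨fun a ha => (hsel a ha).2, ?_⟩
  have hsub : (Finset.univ.filter fun a : Fin l => (a : ℕ) < k).map σ.symm.toEmbedding ⊆
      Finset.univ.filter fun a : Fin l => (a : ℕ) < k := by
    intro b hb
    obtain ⟨a, ha, rfl⟩ := Finset.mem_map.mp hb
    simpa using (hsel a (by simpa using ha)).1
  have heq := Finset.eq_of_subset_of_card_le hsub (by rw [Finset.card_map])
  intro b
  simpa using Finset.ext_iff.mp heq b

lemma sum_Ico_pad {l : ℕ} (lam : Fin l → ℕ) (k : ℕ) :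
    ∑ a ∈ Finset.Ico k l, pad lam a =
      ∑ a ∈ Finset.univ.filter (fun a : Fin l => k ≤ (a : ℕ)), lam a := by
  have h : ∀ a : Fin l, (if k ≤ (a : ℕ) then lam a else 0) =
      (fun n : ℕ => if k ≤ n then pad lam n else 0) a := by
    intro a
    simp [pad]
  rw [Finset.sum_filter, Finset.sum_congr rfl fun a _ => h a,
    Fin.sum_univ_eq_sum_range (fun n : ℕ => if k ≤ n then pad lam n else 0) l,
    ← Finset.sum_filter]
  congr 1
  ext n
  simp [and_comm]

/-- Let `λ` be a partition of length `l`, `w̄_a = λ_a + l - a` (1-indexed),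
`0 ≤ k ≤ l-1` and `r_1,...,r_l ≥ 0` with `Σ r_i = N_{λ,k}`. If
`[w̄_1 - r_1, ..., w̄_l - r_l]` evaluated at `t = [x_1]+⋯+[x_k]` is not identically zero, then:
(i) `r_a = 0` for `a ≤ k`; (ii) `(w̄_{k+1}-r_{k+1}, ..., w̄_l-r_l)` is a permutation of
`(l-k-1, ..., 1, 0)`; (iii) the evaluation equals `± s_{(λ_1,...,λ_k)}([x_1]+⋯+[x_k])`. -/
theorem statement6 (l : ℕ) (lam : Fin l → ℕ)
    (hanti : Antitone lam) (hpos : ∀ i, 1 ≤ lam i)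
    (k : ℕ) (hk : k + 1 ≤ l)
    (r : Fin l → ℕ)
    (hr : ∑ a, r a = ∑ a ∈ Finset.Ico k l, pad lam a)
    (hnz : toPowerSums k
        (bracket (fun a => ((lam a : ℤ) + l - 1 - ((a : ℕ) : ℤ)) - (r a : ℤ))) ≠ 0) :
    (∀ a : Fin l, (a : ℕ) < k → r a = 0)
    ∧ Finset.image (fun a => ((lam a : ℤ) + l - 1 - ((a : ℕ) : ℤ)) - (r a : ℤ))
        (Finset.univ.filter (fun a : Fin l => k ≤ (a : ℕ)))
        = Finset.image (fun n : ℕ => (n : ℤ)) (Finset.range (l - k))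
    ∧ ∃ ε : ℚ, (ε = 1 ∨ ε = -1) ∧
        toPowerSums k
            (bracket (fun a => ((lam a : ℤ) + l - 1 - ((a : ℕ) : ℤ)) - (r a : ℤ)))
          = ε • toPowerSums k (schur (fun a : Fin k => pad lam a)) := by
  set v : Fin l → ℤ := fun a => (lam a : ℤ) + l - 1 - ((a : ℕ) : ℤ) with hv
  have hvanti : StrictAnti v := by
    intro a b hab
    have h1 : lam b ≤ lam a := hanti hab.le
    have h2 : (a : ℕ) < b := hab
    simp only [hv]
    omega
  change toPowerSums k (bracket fun a => v a - (r a : ℤ)) ≠ 0 at hnz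
  rw [toPowerSums_bracket] at hnz ⊢
  obtain ⟨σ, hge⟩ := exists_perm_of_reducedMatrix_det_ne_zero hnz
  rw [sum_Ico_pad] at hr
  have hsum : ∑ b ∈ Finset.univ.filter (fun b : Fin l => (b : ℕ) < k), v b ≤
      ∑ b ∈ Finset.univ.filter (fun b : Fin l => (b : ℕ) < k), (v (σ b) - r (σ b)) := by
    have htotal := Equiv.sum_comp σ fun a => v a - (r a : ℤ)
    rw [← Finset.sum_filter_add_sum_filter_not _ (fun b : Fin l => (b : ℕ) < k),
      Finset.sum_sub_distrib (s := Finset.univ),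
      ← Finset.sum_filter_add_sum_filter_not (s := Finset.univ) (f := v)
        (fun b : Fin l => (b : ℕ) < k), ← Nat.cast_sum, hr, Nat.cast_sum] at htotal
    simp only [not_lt] at htotal
    have htail : ∑ b ∈ Finset.univ.filter (fun b : Fin l => k ≤ (b : ℕ)), (v (σ b) - r (σ b)) =
        ∑ b ∈ Finset.univ.filter (fun b : Fin l => k ≤ (b : ℕ)), v b -
          ∑ b ∈ Finset.univ.filter (fun b : Fin l => k ≤ (b : ℕ)), (lam b : ℤ) := by
      rw [← Finset.sum_sub_distrib]
      refine Finset.sum_congr rfl fun b hb => ?_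
      rw [hge b (Finset.mem_filter.mp hb).2]
      simp only [hv]
      ring
    linarith
  obtain ⟨hr0, hσ⟩ := eq_zero_and_lt_iff_of_sum_le hk hvanti hsum
  refine ⟨hr0, ?_, ?_⟩
  · ext z
    simp only [Finset.mem_image, Finset.mem_filter, Finset.mem_univ, true_and, Finset.mem_range]
    constructor
    · rintro ⟨a, ha, rfl⟩
      obtain ⟨b, rfl⟩ := σ.surjective a
      have hb : k ≤ (b : ℕ) := not_lt.mp fun h => not_lt.mpr ha ((hσ b).mpr h)
      exact ⟨l - 1 - b, by omega, by have := hge b hb; simp only [hv] at this; omega⟩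
    · rintro ⟨n, hn, rfl⟩
      have hb : k ≤ l - 1 - n := by omega
      refine ⟨σ ⟨l - 1 - n, by omega⟩, not_lt.mp fun h => not_lt.mpr hb ((hσ _).mp h), ?_⟩
      have := hge ⟨l - 1 - n, by omega⟩ hb
      simp only [hv] at this
      omega
  · obtain ⟨ε, hε⟩ := reducedMatrix_det_eq (w := fun a => v a - (r a : ℤ)) (by omega : k ≤ l) hge hσ
    have hschur : (Matrix.of fun a b : Fin k => toPowerSums k
        (pz (v (Fin.castLE (by omega : k ≤ l) a) - (r (Fin.castLE (by omega : k ≤ l) a) : ℤ)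
          - (l : ℤ) + ((b : ℕ) : ℤ) + 1))).det =
        toPowerSums k (schur fun a : Fin k => pad lam a) := by
      rw [schur, toPowerSums_det]
      congr 1
      ext1 a b
      have ha : (a : ℕ) < l := by omega
      simp only [Matrix.of_apply, hv, pad, dif_pos ha, hr0 (Fin.castLE _ a) a.2]
      congr 2
      simp only [Fin.castLE, Fin.val_mk]
      push_cast
      ring
    rw [hschur] at hε
    refine ⟨((ε : ℤ) : ℚ), ?_, ?_⟩
    · rcases Int.units_eq_one_or ε with rfl | rfl <;> simp
    · rw [hε]
      rcases Int.units_eq_one_or ε with rfl | rfl <;> simp
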